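/- arXiv:2202.08308 — 2 statements merged into one kernel-verified Lean document; each statement's English description precedes it below -/
import Mathlib

section
/- Let n be any positive integer and λ any infinite cardinal, and let 𝓘_λ^n carry a shift-continuous T₁-topology (so that it is a T₁-semitopological semigroup). Then the following conditions are equivalent: (i) 𝓘_λ^n is sequentially pracompact; (ii) 𝓘_λ^n is totally countably pracompact; (iii) 𝓘_λ^n is feebly compact. -/
/-!
Both pracompactness conditions imply feeble compactness in every space: choose points of the
dense set inside infinitely many members of a locally finite family.

For the converse, every up-set `{β | α ≤ β}` of the natural order is clopen, because it is the
fibre over `α` of the continuous map `β ↦ e * β * f` (`e`, `f` the idempotents on the domain and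
range of `α`), whose range is finite and hence discrete in a `T₁` space (`isClopen_Ici`). Since
ranks are bounded, each nonempty set of partial bijections has a maximal element
(`exists_maximal_of_nonempty`); a maximal element of an open set is isolated, so the isolated
points are dense (`dense_isolated`). Given a sequence `u` of isolated points, let `α` be maximal
among the elements lying below infinitely many `u k`, and pass to the subsequence of terms
above `α`. By clopenness of up-sets and maximality, `α` is the only possible cluster point of any
further subsequence, while feeble compactness provides each of these with a cluster point. Hence
the subsequence converges to `α`, and its closure is compact (`exists_good_subsequence`).
-/

open Set Topology Filter

/-- The symmetric inverse semigroup `𝓘_γ^n` of partial bijections of the set `γ`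
of rank `≤ n`, represented by their (finite) graphs. -/
structure SymInvSg (γ : Type*) (n : ℕ) where
  graph : Set (γ × γ)
  inj' : ∀ ⦃x y x' y'⦄, (x, y) ∈ graph → (x', y') ∈ graph → (x = x' ↔ y = y')
  finite' : graph.Finite
  card_le' : graph.ncard ≤ n

namespace SymInvSg

variable {γ : Type*} {n : ℕ}

theorem ext' {a b : SymInvSg γ n} (h : a.graph = b.graph) : a = b := by
  cases a; cases b; simpa using h

/-- Composition of partial bijections (in the left-to-right convention of
transformation semigroups, the choice of convention being immaterial). -/
instance : Mul (SymInvSg γ n) where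
  mul a b :=
    { graph := {p | ∃ y, (p.1, y) ∈ a.graph ∧ (y, p.2) ∈ b.graph}
      inj' := by
        rintro x z x' z' ⟨y, hxy, hyz⟩ ⟨y', hxy', hyz'⟩
        constructor
        · rintro rfl
          have hy : y = y' := (a.inj' hxy hxy').mp rfl
          subst hy
          exact (b.inj' hyz hyz').mp rfl
        · rintro rfl
          have hy : y = y' := (b.inj' hyz hyz').mpr rfl
          subst hy
          exact (a.inj' hxy hxy').mpr rfl
      finite' := by
        have : {p : γ × γ | ∃ y, (p.1, y) ∈ a.graph ∧ (y, p.2) ∈ b.graph} ⊆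
            (fun q : (γ × γ) × (γ × γ) => (q.1.1, q.2.2)) '' (a.graph ×ˢ b.graph) := by
          rintro ⟨x, z⟩ ⟨y, hxy, hyz⟩
          exact ⟨((x, y), (y, z)), ⟨hxy, hyz⟩, rfl⟩
        exact Set.Finite.subset (Set.Finite.image _ (a.finite'.prod b.finite')) this
      card_le' := by
        have hinj : Set.InjOn Prod.fst
            {p : γ × γ | ∃ y, (p.1, y) ∈ a.graph ∧ (y, p.2) ∈ b.graph} := by
          rintro ⟨x, z⟩ ⟨y, hxy, hyz⟩ ⟨x', z'⟩ ⟨y', hxy', hyz'⟩ h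
          simp only at h
          subst h
          have hy : y = y' := (a.inj' hxy hxy').mp rfl
          subst hy
          have hz : z = z' := (b.inj' hyz hyz').mp rfl
          simp [hz]
        calc ({p : γ × γ | ∃ y, (p.1, y) ∈ a.graph ∧ (y, p.2) ∈ b.graph}).ncard
            ≤ (Prod.fst '' a.graph).ncard := by
              refine Set.ncard_le_ncard_of_injOn Prod.fst ?_ hinj (a.finite'.image _)
              rintro ⟨x, z⟩ hp
              exact ⟨(x, hp.choose), hp.choose_spec.1, rfl⟩
          _ ≤ a.graph.ncard := Set.ncard_image_le a.finite'
          _ ≤ n := a.card_le' }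

theorem mul_graph (a b : SymInvSg γ n) :
    (a * b).graph = {p : γ × γ | ∃ y, (p.1, y) ∈ a.graph ∧ (y, p.2) ∈ b.graph} := rfl

instance : Semigroup (SymInvSg γ n) where
  mul_assoc a b c := by
    refine ext' ?_
    simp only [mul_graph]
    ext ⟨x, w⟩
    constructor
    · rintro ⟨z, ⟨y, hxy, hyz⟩, hzw⟩
      exact ⟨y, hxy, z, hyz, hzw⟩
    · rintro ⟨y, hxy, z, hyz, hzw⟩
      exact ⟨z, ⟨y, hxy, hyz⟩, hzw⟩

/-- The zero of `𝓘_γ^n` is the empty partial map. -/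
instance : Zero (SymInvSg γ n) :=
  ⟨{ graph := ∅
     inj' := by simp
     finite' := Set.finite_empty
     card_le' := by simp }⟩

/-- The natural partial order on the inverse semigroup `𝓘_γ^n`:
`α ≼ β` iff the graph of `α` is contained in the graph of `β`. -/
instance : PartialOrder (SymInvSg γ n) where
  le a b := a.graph ⊆ b.graph
  le_refl a := subset_rfl
  le_trans a b c h₁ h₂ := Set.Subset.trans h₁ h₂
  le_antisymm a b h₁ h₂ := ext' (subset_antisymm h₁ h₂)

/-- The rank of a partial bijection: the cardinality of its domain
(equivalently, of its graph). -/
noncomputable def rank (a : SymInvSg γ n) : ℕ := a.graph.ncard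

/-- `𝓘_A^n`: the subsemigroup of partial bijections with domain and range inside `A`. -/
def restrictedTo (A : Set γ) : Set (SymInvSg γ n) :=
  {α | ∀ p ∈ α.graph, p.1 ∈ A ∧ p.2 ∈ A}

end SymInvSg

/-- A topology is shift-continuous when all left and right translations are continuous,
i.e. the space is a semitopological semigroup. -/
def ShiftContinuous (X : Type*) [TopologicalSpace X] [Mul X] : Prop :=
  ∀ a : X, Continuous (fun x => a * x) ∧ Continuous (fun x => x * a)

/-- A space is feebly compact if every locally finite family of nonempty open sets is finite. -/
def FeeblyCompact (X : Type*) [TopologicalSpace X] : Prop :=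
  ∀ F : Set (Set X), (∀ U ∈ F, IsOpen U ∧ U.Nonempty) →
    LocallyFinite (fun U : F => (U : Set X)) → F.Finite

/-- A space is sequentially pracompact if it has a dense subset `D` such that every
sequence in `D` has a convergent subsequence. -/
def SequentiallyPracompact (X : Type*) [TopologicalSpace X] : Prop :=
  ∃ D : Set X, Dense D ∧ ∀ u : ℕ → X, (∀ k, u k ∈ D) →
    ∃ (x : X) (φ : ℕ → ℕ), StrictMono φ ∧ Filter.Tendsto (u ∘ φ) Filter.atTop (nhds x)

/-- A space is totally countably pracompact if it has a dense subset `D` such that every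
sequence in `D` has a subsequence whose closure is compact. -/
def TotallyCountablyPracompact (X : Type*) [TopologicalSpace X] : Prop :=
  ∃ D : Set X, Dense D ∧ ∀ u : ℕ → X, (∀ k, u k ∈ D) →
    ∃ φ : ℕ → ℕ, StrictMono φ ∧ IsCompact (closure (Set.range (u ∘ φ)))

/-- A space is countably pracompact if it has a dense subset `A` such that every infinite
subset of `A` has an accumulation point in the space. -/
def CountablyPracompact (X : Type*) [TopologicalSpace X] : Prop :=
  ∃ A : Set X, Dense A ∧ ∀ B ⊆ A, B.Infinite → ∃ x : X, AccPt x (Filter.principal B)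

/-- A space is ω-bounded-pracompact if it has a dense subset `D` such that every countable
subset of `D` has compact closure. -/
def OmegaBoundedPracompact (X : Type*) [TopologicalSpace X] : Prop :=
  ∃ D : Set X, Dense D ∧ ∀ C ⊆ D, C.Countable → IsCompact (closure C)

/-- A space is feebly ω-bounded if for every sequence of nonempty open sets there is a
compact set meeting all of them. -/
def FeeblyOmegaBounded (X : Type*) [TopologicalSpace X] : Prop :=
  ∀ U : ℕ → Set X, (∀ k, IsOpen (U k) ∧ (U k).Nonempty) →
    ∃ K : Set X, IsCompact K ∧ ∀ k, (K ∩ U k).Nonempty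

/-! ### Feeble compactness in general spaces -/

section General

variable {X : Type*} [TopologicalSpace X]

theorem SequentiallyPracompact.feeblyCompact (h : SequentiallyPracompact X) :
    FeeblyCompact X := by
  obtain ⟨D, hD, hseq⟩ := h
  intro F hF hlf
  by_contra hinf
  have hinf' : Infinite F := Set.infinite_coe_iff.mpr hinf
  let e : ℕ ↪ F := Infinite.natEmbedding F
  have hex : ∀ k, ∃ d, d ∈ (e k : Set X) ∧ d ∈ D := fun k =>
    hD.inter_open_nonempty _ (hF _ (e k).2).1 (hF _ (e k).2).2
  choose d hdU hdD using hex
  obtain ⟨x, φ, hφ, hx⟩ := hseq d hdD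
  obtain ⟨V, hV, hfin⟩ := hlf x
  obtain ⟨N, hN⟩ := Filter.eventually_atTop.mp (hx.eventually hV)
  refine (Set.infinite_of_injective_forall_mem (f := fun k => e (φ (N + k))) ?_ ?_) hfin
  · intro a b hab
    have := hφ.injective (e.injective hab)
    omega
  · intro k
    exact ⟨d (φ (N + k)), hdU _, hN _ (by omega)⟩

theorem TotallyCountablyPracompact.feeblyCompact (h : TotallyCountablyPracompact X) :
    FeeblyCompact X := by
  obtain ⟨D, hD, hseq⟩ := h
  intro F hF hlf
  by_contra hinf
  have hinf' : Infinite F := Set.infinite_coe_iff.mpr hinf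
  let e : ℕ ↪ F := Infinite.natEmbedding F
  have hex : ∀ k, ∃ d, d ∈ (e k : Set X) ∧ d ∈ D := fun k =>
    hD.inter_open_nonempty _ (hF _ (e k).2).1 (hF _ (e k).2).2
  choose d hdU hdD using hex
  obtain ⟨φ, hφ, hK⟩ := hseq d hdD
  refine (Set.infinite_of_injective_forall_mem (f := fun k => e (φ k)) ?_ ?_)
    (hlf.finite_nonempty_inter_compact hK)
  · exact e.injective.comp hφ.injective
  · intro k
    exact ⟨d (φ k), hdU _, subset_closure ⟨k, rfl⟩⟩

/-- In a feebly compact space a sequence of isolated points has a cluster point: otherwise the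
singletons of its terms form a locally finite family, so the sequence takes only finitely many
values, and one of them is taken infinitely often. -/
theorem FeeblyCompact.exists_clusterPt (h : FeeblyCompact X) (u : ℕ → X)
    (hu : ∀ k, IsOpen {u k}) : ∃ x, ∀ V ∈ 𝓝 x, ∃ᶠ k in atTop, u k ∈ V := by
  by_contra! hno
  have hF : (Set.range fun k => ({u k} : Set X)).Finite := by
    apply h
    · rintro _ ⟨k, rfl⟩
      exact ⟨hu k, Set.singleton_nonempty _⟩
    · intro x
      obtain ⟨V, hV, hVu⟩ := hno x
      obtain ⟨N, hN⟩ := Filter.eventually_atTop.mp hVu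
      refine ⟨V, hV, Set.Finite.of_finite_image
        (((Set.finite_Iio N).image fun k => ({u k} : Set X)).subset ?_)
        Subtype.val_injective.injOn⟩
      rintro _ ⟨⟨_, k, rfl⟩, ⟨y, rfl, hy⟩, rfl⟩
      exact ⟨k, not_le.mp fun hk => hN k hk hy, rfl⟩
  have hR : (Set.range u).Finite := by
    refine Set.Finite.of_finite_image (f := fun x => ({x} : Set X)) ?_
      Set.singleton_injective.injOn
    rwa [← Set.range_comp]
  have : Finite (Set.range u) := hR
  obtain ⟨⟨x, hx⟩, hinf⟩ := Finite.exists_infinite_fiber (Set.rangeFactorization u)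
  obtain ⟨V, hV, hVu⟩ := hno x
  refine Filter.not_frequently.mpr hVu (Nat.frequently_atTop_iff_infinite.mpr
    ((Set.infinite_coe_iff.mp hinf).mono fun k hk => ?_))
  have hk' : u k = x := congrArg Subtype.val hk
  show u k ∈ V
  rw [hk']
  exact mem_of_mem_nhds hV

end General

/-! ### The natural order on partial bijections -/

namespace SymInvSg

variable {γ : Type*} {n : ℕ}

/-- The identity map of the domain of `α`. -/
def domId (α : SymInvSg γ n) : SymInvSg γ n where
  graph := (fun p : γ × γ => (p.1, p.1)) '' α.graph
  inj' := by
    rintro x y x' y' ⟨p, -, hp⟩ ⟨q, -, hq⟩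
    simp only [Prod.mk.injEq] at hp hq
    rw [← hp.1, ← hp.2, ← hq.1, ← hq.2]
  finite' := α.finite'.image _
  card_le' := (Set.ncard_image_le α.finite').trans α.card_le'

/-- The identity map of the range of `α`. -/
def ranId (α : SymInvSg γ n) : SymInvSg γ n where
  graph := (fun p : γ × γ => (p.2, p.2)) '' α.graph
  inj' := by
    rintro x y x' y' ⟨p, -, hp⟩ ⟨q, -, hq⟩
    simp only [Prod.mk.injEq] at hp hq
    rw [← hp.1, ← hp.2, ← hq.1, ← hq.2]
  finite' := α.finite'.image _
  card_le' := (Set.ncard_image_le α.finite').trans α.card_le'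

theorem mem_domId_mul_mul_ranId (α β : SymInvSg γ n) (x y : γ) :
    (x, y) ∈ (α.domId * β * α.ranId).graph ↔
      (x, y) ∈ β.graph ∧ (∃ z, (x, z) ∈ α.graph) ∧ ∃ w, (w, y) ∈ α.graph := by
  constructor
  · rintro ⟨y', ⟨x', ⟨⟨a, b⟩, hab, h1⟩, h2⟩, ⟨⟨c, d⟩, hcd, h3⟩⟩
    simp only [Prod.mk.injEq] at h1 h2 h3
    obtain ⟨rfl, rfl⟩ := h1
    obtain ⟨rfl, rfl⟩ := h3
    exact ⟨h2, ⟨_, hab⟩, ⟨_, hcd⟩⟩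
  · rintro ⟨h, ⟨z, hz⟩, ⟨w, hw⟩⟩
    exact ⟨y, ⟨x, ⟨_, hz, rfl⟩, h⟩, ⟨_, hw, rfl⟩⟩

theorem domId_mul_mul_ranId_eq_iff (α β : SymInvSg γ n) :
    α.domId * β * α.ranId = α ↔ α ≤ β := by
  constructor
  · rintro h ⟨x, y⟩ hxy
    rw [← h, mem_domId_mul_mul_ranId] at hxy
    exact hxy.1
  · intro h
    refine ext' (Set.ext fun ⟨x, y⟩ => ?_)
    rw [mem_domId_mul_mul_ranId]
    constructor
    · rintro ⟨hβ, ⟨z, hz⟩, -⟩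
      rwa [(β.inj' hβ (h hz)).mp rfl]
    · exact fun hxy => ⟨h hxy, ⟨_, hxy⟩, ⟨_, hxy⟩⟩

theorem finite_range_domId_mul_mul_ranId (α : SymInvSg γ n) :
    (Set.range fun β : SymInvSg γ n => α.domId * β * α.ranId).Finite := by
  have hfin : ((Prod.fst '' α.graph) ×ˢ (Prod.snd '' α.graph)).Finite :=
    (α.finite'.image _).prod (α.finite'.image _)
  refine Set.Finite.of_finite_image (f := graph) (hfin.finite_subsets.subset ?_)
    (fun a _ b _ h => ext' h)
  rintro _ ⟨_, ⟨β, rfl⟩, rfl⟩ ⟨x, y⟩ hxy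
  obtain ⟨-, ⟨z, hz⟩, ⟨w, hw⟩⟩ := (mem_domId_mul_mul_ranId α β x y).mp hxy
  exact ⟨⟨_, hz, rfl⟩, ⟨_, hw, rfl⟩⟩

theorem exists_maximal_of_nonempty (s : Set (SymInvSg γ n)) (hs : s.Nonempty) :
    ∃ a ∈ s, ∀ b ∈ s, a ≤ b → b = a := by
  obtain ⟨a, ha, hmin⟩ :=
    (measure fun a : SymInvSg γ n => n - a.graph.ncard).wf.has_min s hs
  refine ⟨a, ha, fun b hb hab => ext' (Set.eq_of_subset_of_ncard_le hab ?_ b.finite').symm⟩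
  have h1 : ¬ n - b.graph.ncard < n - a.graph.ncard := hmin b hb
  have h2 := b.card_le'
  have h3 := a.card_le'
  omega

/-! ### Shift-continuous `T₁` topologies -/

variable [TopologicalSpace (SymInvSg γ n)] [T1Space (SymInvSg γ n)]

theorem isClopen_Ici (hsc : ShiftContinuous (SymInvSg γ n)) (α : SymInvSg γ n) :
    IsClopen (Set.Ici α) := by
  let g : SymInvSg γ n → SymInvSg γ n := fun β => α.domId * β * α.ranId
  have hg : Continuous g := (hsc α.ranId).2.comp (hsc α.domId).1
  have h1 : Set.Ici α = g ⁻¹' {α} :=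
    Set.ext fun β => (domId_mul_mul_ranId_eq_iff α β).symm
  have h2 : Set.Ici α = g ⁻¹' (Set.range g \ {α})ᶜ := by
    rw [h1]
    ext β
    simp
  refine ⟨h1 ▸ isClosed_singleton.preimage hg, h2 ▸ IsOpen.preimage hg ?_⟩
  exact ((finite_range_domId_mul_mul_ranId α).subset Set.sdiff_subset).isClosed.isOpen_compl

theorem dense_isolated (hsc : ShiftContinuous (SymInvSg γ n)) :
    Dense {a : SymInvSg γ n | IsOpen {a}} := by
  refine dense_iff_inter_open.mpr fun U hU hne => ?_
  obtain ⟨a, ha, hmax⟩ := exists_maximal_of_nonempty U hne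
  refine ⟨a, ha, ?_⟩
  have : ({a} : Set (SymInvSg γ n)) = U ∩ Set.Ici a := by
    ext b
    constructor
    · rintro rfl
      exact ⟨ha, Set.self_mem_Ici⟩
    · exact fun hb => hmax b hb.1 hb.2
  show IsOpen {a}
  rw [this]
  exact hU.inter (isClopen_Ici hsc a).isOpen

/-- The limit `α` is a maximal element among those lying below infinitely many `u k`. -/
theorem exists_good_subsequence (hsc : ShiftContinuous (SymInvSg γ n))
    (h : FeeblyCompact (SymInvSg γ n)) (u : ℕ → SymInvSg γ n) (hu : ∀ k, IsOpen {u k}) :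
    ∃ (α : SymInvSg γ n) (φ : ℕ → ℕ), StrictMono φ ∧ Tendsto (u ∘ φ) atTop (𝓝 α) ∧
      IsCompact (closure (Set.range (u ∘ φ))) := by
  obtain ⟨α, hα, hmax⟩ := exists_maximal_of_nonempty
    {a : SymInvSg γ n | ∃ᶠ k in atTop, a ≤ u k}
    ⟨0, (Filter.Eventually.of_forall fun k => Set.empty_subset _).frequently⟩
  obtain ⟨φ, hφ, hle⟩ := Filter.extraction_of_frequently_atTop hα
  have hlim : Tendsto (u ∘ φ) atTop (𝓝 α) := by
    by_contra hnot
    obtain ⟨U, hU, hUu⟩ := Filter.not_tendsto_iff_exists_frequently_notMem.mp hnot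
    obtain ⟨ψ, hψ, hout⟩ := Filter.extraction_of_frequently_atTop hUu
    obtain ⟨x, hx⟩ := h.exists_clusterPt (u ∘ φ ∘ ψ) fun k => hu _
    have hαx : α ≤ x := by
      by_contra hαx
      obtain ⟨k, hk⟩ := (hx _ ((isClopen_Ici hsc α).isClosed.isOpen_compl.mem_nhds hαx)).exists
      exact hk (hle _)
    have hfreq : ∃ᶠ k in atTop, x ≤ u k :=
      (hφ.comp hψ).tendsto_atTop.frequently
        (hx _ ((isClopen_Ici hsc x).isOpen.mem_nhds (le_refl x)))
    obtain rfl := hmax x hfreq hαx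
    obtain ⟨k, hk⟩ := (hx U hU).exists
    exact hout k hk
  refine ⟨α, φ, hφ, hlim, ?_⟩
  have hcl : IsClosed (insert α (Set.range (u ∘ φ))) := by
    refine isClosed_of_closure_subset fun x hx => ?_
    have hαx : α ≤ x := by
      refine closure_minimal ?_ (isClopen_Ici hsc α).isClosed hx
      rintro _ (rfl | ⟨k, rfl⟩)
      · exact Set.self_mem_Ici
      · exact hle k
    by_cases hxα : x = α
    · exact Or.inl hxα
    -- By maximality of `α`, only finitely many terms lie in the open up-set of `x`, so `x` is in
    -- the closure of a finite set.
    have hev : ¬ ∃ᶠ k in atTop, x ≤ (u ∘ φ) k := fun hf =>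
      hxα (hmax x (hφ.tendsto_atTop.frequently hf) hαx)
    have hfin : {k | x ≤ (u ∘ φ) k}.Finite := by
      rwa [Nat.frequently_atTop_iff_infinite, Set.not_infinite] at hev
    have hfin' : (insert α ((u ∘ φ) '' {k | x ≤ (u ∘ φ) k})).Finite :=
      (hfin.image _).insert _
    have hmem : x ∈ closure (Set.Ici x ∩ insert α (Set.range (u ∘ φ))) :=
      (isClopen_Ici hsc x).isOpen.inter_closure ⟨le_refl x, hx⟩
    have hx' := closure_minimal (t := insert α ((u ∘ φ) '' {k | x ≤ (u ∘ φ) k}))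
      (by
        rintro _ ⟨hxy, rfl | ⟨k, rfl⟩⟩
        · exact Or.inl rfl
        · exact Or.inr ⟨k, hxy, rfl⟩) hfin'.isClosed hmem
    exact Set.insert_subset_insert (Set.image_subset_range _ _) hx'
  exact hlim.isCompact_insert_range.of_isClosed_subset isClosed_closure
    (closure_minimal (Set.subset_insert _ _) hcl)

end SymInvSg

/-- For a `T₁`-semitopological semigroup `𝓘_λ^n` (`n` a positive integer,
`λ` an infinite cardinal) the conditions "sequentially pracompact",
"totally countably pracompact" and "feebly compact" are equivalent. -/
theorem sequentiallyPracompact_iff_totallyCountablyPracompact_iff_feeblyCompact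
    {γ : Type*} [Infinite γ] {n : ℕ} (hn : 0 < n)
    [TopologicalSpace (SymInvSg γ n)] [T1Space (SymInvSg γ n)]
    (hsc : ShiftContinuous (SymInvSg γ n)) :
    (SequentiallyPracompact (SymInvSg γ n) ↔ TotallyCountablyPracompact (SymInvSg γ n)) ∧
    (TotallyCountablyPracompact (SymInvSg γ n) ↔ FeeblyCompact (SymInvSg γ n)) := by
  have hfs : FeeblyCompact (SymInvSg γ n) → SequentiallyPracompact (SymInvSg γ n) := fun h =>
    ⟨_, SymInvSg.dense_isolated hsc, fun u hu =>
      let ⟨α, φ, hφ, hlim, _⟩ := SymInvSg.exists_good_subsequence hsc h u hu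
      ⟨α, φ, hφ, hlim⟩⟩
  have hft : FeeblyCompact (SymInvSg γ n) → TotallyCountablyPracompact (SymInvSg γ n) := fun h =>
    ⟨_, SymInvSg.dense_isolated hsc, fun u hu =>
      let ⟨_, φ, hφ, _, hK⟩ := SymInvSg.exists_good_subsequence hsc h u hu
      ⟨φ, hφ, hK⟩⟩
  exact ⟨⟨fun h => hft h.feeblyCompact, fun h => hfs h.feeblyCompact⟩,
    ⟨fun h => h.feeblyCompact, hft⟩⟩
end

section
/- Let n be any positive integer, λ any infinite cardinal, and A an arbitrary infinite subset of λ. If 𝓘_λ^n carries a compact shift-continuous T₁-topology (so it is a compact T₁-semitopological semigroup), then 𝓘_A^n with the topology induced from 𝓘_λ^n is a compact semitopological semigroup. -/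
/-!
For `x y : γ` let `single x y` be the rank-one partial bijection `{(x, y)}`. Since
`single x x * s * single y y` is the restriction of `s` to the pair `(x, y)`, it vanishes exactly
when `(x, y) ∉ s.graph`. The two-sided shift is continuous and `{0}` is closed in a `T₁` space, so
each set `{s | (x, y) ∉ s.graph}` is closed. `restrictedTo A` is the intersection of these sets over
all `(x, y)` outside `A ×ˢ A`; hence it is closed in a compact space, thus compact. Continuity of its
translations is inherited from the whole semigroup.
-/

open Set Topology Filter

namespace SymInvSg

/-- The rank-one partial bijection with graph `{(x, y)}`; its existence requires `0 < n`. -/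
def single {γ : Type*} {n : ℕ} (hn : 0 < n) (x y : γ) : SymInvSg γ n where
  graph := {(x, y)}
  inj' := by
    intro a b a' b' h h'
    simp only [Set.mem_singleton_iff, Prod.mk.injEq] at h h'
    simp [h, h']
  finite' := Set.finite_singleton _
  card_le' := by rw [Set.ncard_singleton]; exact hn

theorem single_mul_mul_single_eq_zero_iff {γ : Type*} {n : ℕ} (hn : 0 < n) (x y : γ)
    (s : SymInvSg γ n) :
    single hn x x * s * single hn y y = 0 ↔ (x, y) ∉ s.graph := by
  constructor
  · intro h hs
    have hmem : (x, y) ∈ (single hn x x * s * single hn y y).graph :=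
      ⟨y, ⟨x, rfl, hs⟩, rfl⟩
    rw [h] at hmem
    exact hmem
  · intro hs
    refine ext' (Set.eq_empty_iff_forall_notMem.mpr ?_)
    rintro ⟨a, b⟩ ⟨c, ⟨d, had, hdc⟩, hcb⟩
    obtain ⟨-, rfl⟩ := Prod.mk.inj (Set.mem_singleton_iff.mp had)
    obtain ⟨rfl, -⟩ := Prod.mk.inj (Set.mem_singleton_iff.mp hcb)
    exact hs hdc

theorem isClosed_notMem_graph {γ : Type*} {n : ℕ} (hn : 0 < n)
    [TopologicalSpace (SymInvSg γ n)] [T1Space (SymInvSg γ n)]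
    (hsc : ShiftContinuous (SymInvSg γ n)) (x y : γ) :
    IsClosed {s : SymInvSg γ n | (x, y) ∉ s.graph} := by
  have hcont : Continuous fun s : SymInvSg γ n => single hn x x * s * single hn y y :=
    (hsc (single hn y y)).2.comp (hsc (single hn x x)).1
  have hpre := (isClosed_singleton (x := (0 : SymInvSg γ n))).preimage hcont
  convert hpre using 1
  ext s
  exact (single_mul_mul_single_eq_zero_iff hn x y s).symm

theorem isClosed_restrictedTo {γ : Type*} {n : ℕ} (hn : 0 < n)
    [TopologicalSpace (SymInvSg γ n)] [T1Space (SymInvSg γ n)]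
    (hsc : ShiftContinuous (SymInvSg γ n)) (A : Set γ) :
    IsClosed (restrictedTo A : Set (SymInvSg γ n)) := by
  have heq : (restrictedTo A : Set (SymInvSg γ n)) =
      ⋂ p ∈ (A ×ˢ A)ᶜ, {s : SymInvSg γ n | (p.1, p.2) ∉ s.graph} := by
    ext s
    simp only [restrictedTo, Set.mem_ofPred_eq, Set.mem_iInter, Set.mem_compl_iff, Set.mem_prod]
    exact ⟨fun h p hp hs => hp (h p hs), fun h p hs => by_contra fun hp => h p hp hs⟩
  rw [heq]
  exact isClosed_biInter fun p _ => isClosed_notMem_graph hn hsc p.1 p.2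

end SymInvSg

/-- If `𝓘_λ^n` is a compact `T₁`-semitopological semigroup (`n` a positive
integer, `λ` an infinite cardinal) and `A ⊆ λ` is infinite, then `𝓘_A^n` with the induced
topology is a compact semitopological semigroup. -/
theorem isCompact_restrictedTo {γ : Type*} [Infinite γ] {n : ℕ} (hn : 0 < n)
    [TopologicalSpace (SymInvSg γ n)] [T1Space (SymInvSg γ n)]
    (hsc : ShiftContinuous (SymInvSg γ n)) [CompactSpace (SymInvSg γ n)]
    (A : Set γ) (hA : A.Infinite) :
    IsCompact (SymInvSg.restrictedTo A : Set (SymInvSg γ n)) ∧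
    ∀ a ∈ (SymInvSg.restrictedTo A : Set (SymInvSg γ n)),
      ContinuousOn (fun x => a * x) (SymInvSg.restrictedTo A : Set (SymInvSg γ n)) ∧
      ContinuousOn (fun x => x * a) (SymInvSg.restrictedTo A : Set (SymInvSg γ n)) := by
  exact ⟨(SymInvSg.isClosed_restrictedTo hn hsc A).isCompact,
    fun a _ => ⟨(hsc a).1.continuousOn, (hsc a).2.continuousOn⟩⟩
end
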